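/- arXiv:2501.05635 — 2 statements merged into one kernel-verified Lean document; each statement's English description precedes it below -/
import Mathlib

section
/- Let Y, X be random variables on a probability space (Ω, μ) taking values in finite nonempty types (with the discrete σ-algebra, all maps measurable). Then the Bayes error satisfies 1 − ∑_x max_y μ(X = x ∧ Y = y) ≤ (1/2) · H₂[Y | X], where H₂ denotes conditional Shannon entropy with logarithm base 2. -/
open MeasureTheory

/-- Base-2 Shannon entropy of a random variable `X` with values in a finite type,
with the convention `0 * log 0 = 0` (which holds since `Real.logb 2 0 = 0`). -/
noncomputable def ent2 {Ω α : Type*} [MeasurableSpace Ω] [Fintype α]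
    (μ : Measure Ω) (X : Ω → α) : ℝ :=
  -∑ x : α, (μ (X ⁻¹' {x})).toReal * Real.logb 2 (μ (X ⁻¹' {x})).toReal

/-- Base-2 conditional entropy `H₂[Y | X] = H₂[⟨Y,X⟩] - H₂[X]`. -/
noncomputable def condEnt2 {Ω α β : Type*} [MeasurableSpace Ω] [Fintype α] [Fintype β]
    (μ : Measure Ω) (Y : Ω → α) (X : Ω → β) : ℝ :=
  ent2 μ (fun ω => (Y ω, X ω)) - ent2 μ X

/-!
Fix `x`, and let `q y` be the conditional probability of `Y = y` given `X = x`, with largest value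
`m`. Summing over `x` with weights `μ (X = x)` reduces the claim to `2 (1 - m) log 2 ≤ H(q)`, where
`H(q) = ∑ y, -q y log (q y)`.

* If `m ≤ 1/2`, then `H(q) ≥ -log m`, and the tangent line of `-log` at `1/2` lies above the line
  `2 (1 - m) log 2`.
* If `m ≥ 1/2`, then concavity of `t ↦ -t log t` bounds it below by `t log 2` on `[0, 1/2]` and by
  `(1 - t) log 2` on `[1/2, 1]`. So the largest weight contributes at least `(1 - m) log 2` to
  `H(q)`, and the remaining ones together contribute at least as much again.

For arbitrary maps `X` and `Y` the values of `μ` are outer measures: subadditivity only yields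
`∑ y, q y ≥ 1`, and since `μ (X = x) ≤ 1` any excess goes in favour of the entropy.
-/

section NegMulLog

open Real

variable {ι : Type*} {x c : ℝ}

lemma mul_neg_log_le_negMulLog (hx : 0 ≤ x) (hxc : x ≤ c) : x * -log c ≤ negMulLog x := by
  rcases hx.eq_or_lt with rfl | hpos
  · simp
  · rw [negMulLog, neg_mul, ← mul_neg]
    gcongr

lemma mul_log_two_le_negMulLog (hx : 0 ≤ x) (hx_half : x ≤ 2⁻¹) : x * log 2 ≤ negMulLog x := by
  simpa using mul_neg_log_le_negMulLog hx hx_half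

lemma one_sub_mul_log_two_le_negMulLog (hx_half : 2⁻¹ ≤ x) (hx_one : x ≤ 1) :
    (1 - x) * log 2 ≤ negMulLog x := by
  have hconcave := concaveOn_negMulLog.2 (x := 2⁻¹) (y := 1) (by simp) (by simp)
    (show 0 ≤ 2 * (1 - x) by linarith) (show 0 ≤ 2 * x - 1 by linarith) (by ring)
  have hcomb : 2 * (1 - x) * 2⁻¹ + (2 * x - 1) * 1 = x := by ring
  have hhalf : negMulLog 2⁻¹ = 2⁻¹ * log 2 := by simp [negMulLog]
  simp only [smul_eq_mul, hcomb, hhalf, negMulLog_one] at hconcave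
  linarith

lemma two_mul_one_sub_mul_log_two_le_neg_log (hx : 0 < x) (hx_half : x ≤ 2⁻¹) :
    2 * (1 - x) * log 2 ≤ -log x := by
  have htangent : log 2 + log x ≤ 2 * x - 1 := by
    rw [← log_mul two_ne_zero hx.ne']
    exact log_le_sub_one_of_pos (by positivity)
  have hlog_two : log 2 ≤ 1 := log_two_lt_d9.le.trans (by norm_num)
  have hslope : (1 - 2 * x) * log 2 ≤ 1 - 2 * x := mul_le_of_le_one_right (by linarith) hlog_two
  linarith

lemma one_sub_mul_log_two_le_sum_negMulLog {s : Finset ι} {q : ι → ℝ} {m : ℝ} (hm : m ≤ 1)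
    (hq_nonneg : ∀ i ∈ s, 0 ≤ q i) (hq_le : ∀ i ∈ s, q i ≤ m) (hsum : 1 - m ≤ ∑ i ∈ s, q i) :
    (1 - m) * log 2 ≤ ∑ i ∈ s, negMulLog (q i) := by
  by_cases hlarge : ∃ i ∈ s, 2⁻¹ ≤ q i
  · obtain ⟨i, hi, hi_half⟩ := hlarge
    calc (1 - m) * log 2 ≤ (1 - q i) * log 2 := by gcongr; exact hq_le i hi
      _ ≤ negMulLog (q i) :=
        one_sub_mul_log_two_le_negMulLog hi_half ((hq_le i hi).trans hm)
      _ ≤ ∑ i ∈ s, negMulLog (q i) :=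
        Finset.single_le_sum (f := fun i ↦ negMulLog (q i))
          (fun j hj ↦ negMulLog_nonneg (hq_nonneg j hj) ((hq_le j hj).trans hm)) hi
  · push Not at hlarge
    calc (1 - m) * log 2 ≤ (∑ i ∈ s, q i) * log 2 := by gcongr
      _ = ∑ i ∈ s, q i * log 2 := Finset.sum_mul ..
      _ ≤ ∑ i ∈ s, negMulLog (q i) := by
        gcongr with i hi
        exact mul_log_two_le_negMulLog (hq_nonneg i hi) (hlarge i hi).le

variable [Fintype ι]

lemma neg_log_le_sum_negMulLog {q : ι → ℝ} {m : ℝ} (hm_nonneg : 0 ≤ m) (hm_one : m ≤ 1)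
    (hq_nonneg : ∀ i, 0 ≤ q i) (hq_le : ∀ i, q i ≤ m) (hsum : 1 ≤ ∑ i, q i) :
    -log m ≤ ∑ i, negMulLog (q i) :=
  calc -log m ≤ (∑ i, q i) * -log m :=
        le_mul_of_one_le_left (neg_nonneg.2 (log_nonpos hm_nonneg hm_one)) hsum
    _ = ∑ i, q i * -log m := Finset.sum_mul ..
    _ ≤ ∑ i, negMulLog (q i) :=
      Finset.sum_le_sum fun i _ ↦ mul_neg_log_le_negMulLog (hq_nonneg i) (hq_le i)

lemma two_mul_one_sub_mul_log_two_le_sum_negMulLog {q : ι → ℝ} {i₀ : ι}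
    (hq_nonneg : ∀ i, 0 ≤ q i) (hmax : ∀ i, q i ≤ q i₀) (hmax_one : q i₀ ≤ 1)
    (hsum : 1 ≤ ∑ i, q i) :
    2 * (1 - q i₀) * log 2 ≤ ∑ i, negMulLog (q i) := by
  classical
  rcases le_total (q i₀) 2⁻¹ with hsmall | hlarge
  · have hpos : 0 < q i₀ := by
      obtain ⟨i, -, hi⟩ := Finset.exists_lt_of_sum_lt
        (show ∑ _ : ι, (0 : ℝ) < ∑ i, q i by simpa using one_pos.trans_le hsum)
      exact hi.trans_le (hmax i)
    exact (two_mul_one_sub_mul_log_two_le_neg_log hpos hsmall).trans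
      (neg_log_le_sum_negMulLog hpos.le hmax_one hq_nonneg hmax hsum)
  · rw [← Finset.add_sum_erase _ _ (Finset.mem_univ i₀)] at hsum ⊢
    have hfirst := one_sub_mul_log_two_le_negMulLog hlarge hmax_one
    have hrest := one_sub_mul_log_two_le_sum_negMulLog (s := Finset.univ.erase i₀) hmax_one
      (fun i _ ↦ hq_nonneg i) (fun i _ ↦ hmax i) (by linarith)
    linarith

lemma two_mul_sub_iSup_mul_log_two_le_sum_mul_log_div {p : ι → ℝ} {s : ℝ}
    (hp_nonneg : ∀ i, 0 ≤ p i) (hp_le : ∀ i, p i ≤ s) (hsum : s ≤ ∑ i, p i) :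
    2 * (s - ⨆ i, p i) * log 2 ≤ ∑ i, p i * log (s / p i) := by
  rcases le_or_gt s 0 with hs | hs
  · have hp_zero : ∀ i, p i = 0 := fun i ↦ ((hp_le i).trans hs).antisymm (hp_nonneg i)
    simpa [hp_zero] using mul_nonpos_of_nonpos_of_nonneg
      (mul_nonpos_of_nonneg_of_nonpos zero_le_two hs) (log_nonneg one_le_two)
  · have : Nonempty ι := by
      by_contra! hempty
      exact absurd hsum (by simpa using hs)
    obtain ⟨i₀, hi₀⟩ := exists_eq_ciSup_of_finite (f := p)
    have hmax : ∀ i, p i ≤ p i₀ := fun i ↦ hi₀ ▸ le_ciSup (Set.finite_range p).bddAbove i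
    have hnormalized := two_mul_one_sub_mul_log_two_le_sum_negMulLog (q := fun i ↦ p i / s)
      (fun i ↦ div_nonneg (hp_nonneg i) hs.le) (fun i ↦ by gcongr; exact hmax i)
      ((div_le_one hs).2 (hp_le i₀)) (by rwa [← Finset.sum_div, one_le_div hs])
    rw [← hi₀]
    calc 2 * (s - p i₀) * log 2 = s * (2 * (1 - p i₀ / s) * log 2) := by field_simp
      _ ≤ s * ∑ i, negMulLog (p i / s) := by gcongr
      _ = ∑ i, p i * log (s / p i) := by
        rw [Finset.mul_sum]
        refine Finset.sum_congr rfl fun i _ ↦ ?_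
        rw [negMulLog, ← inv_div s (p i), log_inv, inv_div]
        field_simp

lemma sum_mul_log_div_le_sum_negMulLog_sub {p : ι → ℝ} {s : ℝ} (hs_nonneg : 0 ≤ s)
    (hs_one : s ≤ 1) (hp_nonneg : ∀ i, 0 ≤ p i) (hp_le : ∀ i, p i ≤ s) (hsum : s ≤ ∑ i, p i) :
    ∑ i, p i * log (s / p i) ≤ ∑ i, negMulLog (p i) - negMulLog s := by
  have hterm : ∀ i, p i * log (s / p i) = negMulLog (p i) + p i * log s := by
    intro i
    rcases (hp_nonneg i).eq_or_lt with hi | hi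
    · simp [← hi]
    · rw [log_div (hi.trans_le (hp_le i)).ne' hi.ne', negMulLog]
      ring
  have hexcess : (∑ i, p i) * log s ≤ s * log s :=
    mul_le_mul_of_nonpos_right hsum (log_nonpos hs_nonneg hs_one)
  rw [Finset.sum_congr rfl fun i _ ↦ hterm i, Finset.sum_add_distrib, ← Finset.sum_mul,
    negMulLog, neg_mul, sub_neg_eq_add]
  gcongr

end NegMulLog

section Entropy

variable {Ω α γ : Type*} [MeasurableSpace Ω] (μ : Measure Ω)

lemma ent2_eq_sum_negMulLog_div [Fintype α] (X : Ω → α) :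
    ent2 μ X = (∑ x, Real.negMulLog (μ.real (X ⁻¹' {x}))) / Real.log 2 := by
  simp only [ent2, Real.negMulLog, Real.logb, measureReal_def, Finset.sum_div, neg_mul, neg_div,
    mul_div_assoc, Finset.sum_neg_distrib]

lemma condEnt2_eq_sum_negMulLog_div [Fintype α] [Fintype γ] (Y : Ω → γ) (X : Ω → α) :
    condEnt2 μ Y X = (∑ x, (∑ y, Real.negMulLog (μ.real (X ⁻¹' {x} ∩ Y ⁻¹' {y}))
      - Real.negMulLog (μ.real (X ⁻¹' {x})))) / Real.log 2 := by
  have hfiber : ∀ x y, (fun ω ↦ (Y ω, X ω)) ⁻¹' {(y, x)} = X ⁻¹' {x} ∩ Y ⁻¹' {y} := by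
    intro x y
    ext ω
    simp [and_comm]
  simp only [condEnt2, ent2_eq_sum_negMulLog_div, Fintype.sum_prod_type_right, hfiber,
    Finset.sum_sub_distrib, sub_div]

lemma measureReal_le_sum_inter_preimage_singleton [Fintype γ] (Y : Ω → γ) (A : Set Ω) :
    μ.real A ≤ ∑ y, μ.real (A ∩ Y ⁻¹' {y}) :=
  calc μ.real A = μ.real (⋃ y, A ∩ Y ⁻¹' {y}) := by
        rw [← Set.inter_iUnion, ← Set.preimage_iUnion, Set.iUnion_of_singleton, Set.preimage_univ,
          Set.inter_univ]
    _ ≤ ∑ y, μ.real (A ∩ Y ⁻¹' {y}) := measureReal_iUnion_fintype_le _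

theorem bayesError_le_half_condEnt2_general [IsProbabilityMeasure μ] [Fintype α] [Fintype γ]
    (Y : Ω → γ) (X : Ω → α) :
    1 - ∑ x, ⨆ y, μ.real (X ⁻¹' {x} ∩ Y ⁻¹' {y}) ≤ (1 / 2) * condEnt2 μ Y X := by
  let s (x : α) : ℝ := μ.real (X ⁻¹' {x})
  let p (x : α) (y : γ) : ℝ := μ.real (X ⁻¹' {x} ∩ Y ⁻¹' {y})
  have hp_le (x : α) (y : γ) : p x y ≤ s x := measureReal_mono Set.inter_subset_left
  have hs_le (x : α) : s x ≤ ∑ y, p x y := measureReal_le_sum_inter_preimage_singleton μ Y _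
  have hs_sum : 1 ≤ ∑ x, s x := by
    simpa [s] using measureReal_le_sum_inter_preimage_singleton μ X Set.univ
  have hfiber (x : α) : 2 * (s x - ⨆ y, p x y) * Real.log 2
      ≤ ∑ y, Real.negMulLog (p x y) - Real.negMulLog (s x) :=
    (two_mul_sub_iSup_mul_log_two_le_sum_mul_log_div (fun _ ↦ measureReal_nonneg) (hp_le x)
      (hs_le x)).trans (sum_mul_log_div_le_sum_negMulLog_sub measureReal_nonneg
        measureReal_le_one (fun _ ↦ measureReal_nonneg) (hp_le x) (hs_le x))
  calc 1 - ∑ x, ⨆ y, p x y ≤ ∑ x, (s x - ⨆ y, p x y) := by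
        rw [Finset.sum_sub_distrib]
        gcongr
    _ = (1 / 2) * ((∑ x, 2 * (s x - ⨆ y, p x y) * Real.log 2) / Real.log 2) := by
        rw [← Finset.sum_mul, ← Finset.mul_sum]
        field_simp
    _ ≤ (1 / 2) * ((∑ x, (∑ y, Real.negMulLog (p x y) - Real.negMulLog (s x))) / Real.log 2) := by
        gcongr with x
        exact hfiber x
    _ = (1 / 2) * condEnt2 μ Y X := by rw [condEnt2_eq_sum_negMulLog_div]

end Entropy

/-- Hellman–Raviv inequality: the Bayes error of predicting `Y` from `X` is at most
half the base-2 conditional entropy `H₂[Y | X]`. -/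
theorem bayesError_le_half_condEnt2 {Ω α γ : Type*} [MeasurableSpace Ω]
    [Fintype α] [Nonempty α] [MeasurableSpace α] [DiscreteMeasurableSpace α]
    [Fintype γ] [Nonempty γ] [MeasurableSpace γ] [DiscreteMeasurableSpace γ]
    (μ : Measure Ω) [IsProbabilityMeasure μ]
    (Y : Ω → γ) (X : Ω → α)
    (hY : Measurable Y) (hX : Measurable X) :
    1 - ∑ x : α, ⨆ y : γ, (μ (X ⁻¹' {x} ∩ Y ⁻¹' {y})).toReal
      ≤ (1 / 2) * condEnt2 μ Y X := bayesError_le_half_condEnt2_general μ Y X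
end

section
/- Let z₁, …, zₙ : Ω → ℝᵈ be random vectors on a probability space (Ω, μ) such that for every i each product of coordinates of zᵢ is integrable and the second-moment matrix of each zᵢ equals a common positive definite matrix Σ, and let γ ≥ 0. Then the (expected) Rademacher complexity of the constrained linear class F_γ = {z ↦ θᵀz : θᵀΣθ ≤ γ} satisfies E_z[(1/2ⁿ) ∑_{ε ∈ {−1,1}ⁿ} sup {(1/n) ∑_{i=1}^{n} εᵢ (θᵀ zᵢ(ω)) : θ ∈ ℝᵈ, θᵀ Σ θ ≤ γ}] ≤ √(γ · d / n). -/
open MeasureTheory Matrix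

/-!
Let `A` be a generalized inverse of the second-moment matrix `M`, i.e. `M A M = M`. Almost surely
every `zᵢ` lies in the range of `M`, so `zᵢ = M wᵢ` with `wᵢ = A zᵢ`, and Cauchy–Schwarz for the
semi-inner product `⟨u, v⟩ = uᵀ M v` bounds the supremum over `θᵀ M θ ≤ γ` by
`√(γ ⟨v, v⟩) / n`, where `v = ∑ εᵢ wᵢ`. Averaging over the signs removes the cross terms of
`⟨v, v⟩`, and Jensen's inequality for the square root moves both averages inside. What remains is
`E ⟨wᵢ, wᵢ⟩ = E (zᵢᵀ A zᵢ) = tr (A M)`, which is `rank M` because `A M` is idempotent of that rank.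
-/

section GeneralizedInverse

variable {K m n : Type*} [Field K] [Fintype m] [Fintype n]

lemma exists_mul_mul_self_eq (M : Matrix m n K) : ∃ A : Matrix n m K, M * A * M = M := by
  classical
  obtain ⟨s, hs⟩ := M.toLin'.rangeRestrict.exists_rightInverse_of_surjective
    M.toLin'.range_rangeRestrict
  obtain ⟨g, hg⟩ := s.exists_extend
  refine ⟨LinearMap.toMatrix' g, Matrix.toLin'.injective (LinearMap.ext fun v => ?_)⟩
  have hgs : g (M.toLin' v) = s (M.toLin'.rangeRestrict v) :=
    LinearMap.congr_fun hg (M.toLin'.rangeRestrict v)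
  have hsv : M.toLin' (s (M.toLin'.rangeRestrict v)) = M.toLin' v :=
    congrArg Subtype.val (LinearMap.congr_fun hs (M.toLin'.rangeRestrict v))
  rw [Matrix.toLin'_mul_apply, Matrix.toLin'_mul_apply, Matrix.toLin'_toMatrix', hgs, hsv]

lemma trace_eq_rank_of_isIdempotentElem {P : Matrix n n K} (hP : IsIdempotentElem P) :
    P.trace = P.rank := by
  classical
  have hPlin : IsIdempotentElem P.toLin' := by
    rw [IsIdempotentElem, Module.End.mul_eq_comp, ← Matrix.toLin'_mul, hP.eq]
  rw [← Matrix.trace_toLin'_eq, (LinearMap.IsIdempotentElem.isProj_range _ hPlin).trace,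
    Matrix.rank, Matrix.toLin'_apply']

lemma trace_mul_eq_rank_of_mul_mul_self_eq {M : Matrix m n K} {A : Matrix n m K}
    (hA : M * A * M = M) : (A * M).trace = M.rank := by
  have hidem : IsIdempotentElem (A * M) := by
    rw [IsIdempotentElem, Matrix.mul_assoc, ← Matrix.mul_assoc M, hA]
  have hrank : (A * M).rank = M.rank := by
    refine (Matrix.rank_mul_le_right A M).antisymm ?_
    conv_lhs => rw [← hA, Matrix.mul_assoc]
    exact Matrix.rank_mul_le_right M (A * M)
  rw [trace_eq_rank_of_isIdempotentElem hidem, hrank]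

end GeneralizedInverse

section QuadraticForm

variable {R κ : Type*} [CommSemiring R] [Fintype κ]

lemma dotProduct_mulVec_eq_sum (A : Matrix κ κ R) (x : κ → R) :
    x ⬝ᵥ (A *ᵥ x) = ∑ k, ∑ l, A k l * (x k * x l) := by
  simp only [dotProduct, Matrix.mulVec, Finset.mul_sum, mul_left_comm]

lemma sq_dotProduct_eq_dotProduct_vecMulVec_mulVec (u x : κ → R) :
    (u ⬝ᵥ x) ^ 2 = x ⬝ᵥ (vecMulVec u u *ᵥ x) := by
  rw [Matrix.vecMulVec_mulVec]
  simp [dotProduct_comm, sq]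

lemma dotProduct_mulVec_le_sqrt_mul {M : Matrix κ κ ℝ} (hM : M.PosSemidef) (u v : κ → ℝ) :
    u ⬝ᵥ (M *ᵥ v) ≤ √((u ⬝ᵥ (M *ᵥ u)) * (v ⬝ᵥ (M *ᵥ v))) := by
  classical
  have hnonneg (x : κ → ℝ) : 0 ≤ M.toBilin' x x := by
    simpa [Matrix.toBilin'_apply'] using hM.dotProduct_mulVec_nonneg x
  have hsymm : LinearMap.IsSymm M.toBilin' :=
    ⟨(Matrix.isSymm_toBilin'_iff_isSymm.2 (Matrix.isHermitian_iff_isSymm.1 hM.isHermitian)).eq⟩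
  refine Real.le_sqrt_of_sq_le ?_
  simpa only [Matrix.toBilin'_apply'] using M.toBilin'.apply_sq_le_of_symm hnonneg hsymm u v

lemma dotProduct_nonneg_of_eq_mulVec {M : Matrix κ κ ℝ} (hM : M.PosSemidef) {x w : κ → ℝ}
    (hx : x = M *ᵥ w) : 0 ≤ x ⬝ᵥ w := by
  simpa only [hx, star_trivial, dotProduct_comm] using hM.dotProduct_mulVec_nonneg w

end QuadraticForm

lemma sum_sqrt_le_sqrt_card_mul_sum {α : Type*} (s : Finset α) {f : α → ℝ} (hf : ∀ a, 0 ≤ f a) :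
    ∑ a ∈ s, √(f a) ≤ √(s.card * ∑ a ∈ s, f a) := by
  simpa using Real.sum_sqrt_mul_sqrt_le s (fun _ => zero_le_one) hf

lemma integrable_sqrt {Ω : Type*} [MeasurableSpace Ω] {μ : Measure Ω} [IsFiniteMeasure μ]
    {f : Ω → ℝ} (hf : Integrable f μ) : Integrable (fun ω => √(f ω)) μ := by
  refine ((integrable_const (1 : ℝ)).add hf.abs).mono'
    (Real.continuous_sqrt.comp_aestronglyMeasurable hf.aestronglyMeasurable)
    (.of_forall fun ω => ?_)
  rw [Real.norm_of_nonneg (Real.sqrt_nonneg _)]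
  change √(f ω) ≤ 1 + |f ω|
  exact Real.sqrt_le_iff.2 ⟨by positivity, by nlinarith [le_abs_self (f ω), abs_nonneg (f ω)]⟩

lemma integral_sqrt_le_sqrt_integral {Ω : Type*} [MeasurableSpace Ω] {μ : Measure Ω}
    [IsProbabilityMeasure μ] {f : Ω → ℝ} (hf : Integrable f μ) (hf0 : 0 ≤ᵐ[μ] f) :
    ∫ ω, √(f ω) ∂μ ≤ √(∫ ω, f ω ∂μ) :=
  Real.strictConcaveOn_sqrt.concaveOn.le_map_integral Real.continuous_sqrt.continuousOn
    isClosed_Ici hf0 hf (integrable_sqrt hf)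

section Signs

/-- The sign `±1` encoded by a Boolean, with `true ↦ 1`; uniform random Booleans give Rademacher
variables. -/
def rademacherSign (b : Bool) : ℝ := if b then 1 else -1

lemma rademacherSign_not (b : Bool) : rademacherSign (!b) = -rademacherSign b := by
  cases b <;> simp [rademacherSign]

lemma rademacherSign_mul_self (b : Bool) : rademacherSign b * rademacherSign b = 1 := by
  cases b <;> simp [rademacherSign]

variable {ι : Type*} [Fintype ι] [DecidableEq ι]

lemma sum_rademacherSign_mul_rademacherSign (i j : ι) :
    ∑ ε : ι → Bool, rademacherSign (ε i) * rademacherSign (ε j)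
      = if i = j then 2 ^ Fintype.card ι else 0 := by
  split_ifs with hij
  · subst hij
    simp [rademacherSign_mul_self]
  -- Flipping the `i`-th sign pairs off the terms.
  · refine Finset.sum_involution (fun ε _ => Function.update ε i (!ε i)) (fun ε _ => ?_)
      (fun ε _ _ hε => ?_) (fun _ _ => Finset.mem_univ _) (fun ε _ => ?_)
    · simp [Function.update_of_ne (Ne.symm hij), rademacherSign_not]
    · simpa using congrFun hε i
    · simp

lemma sum_bilin_sum_rademacherSign_smul {E : Type*} [AddCommGroup E] [Module ℝ E]
    (B : LinearMap.BilinForm ℝ E) (w : ι → E) :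
    ∑ ε : ι → Bool, B (∑ i, rademacherSign (ε i) • w i) (∑ i, rademacherSign (ε i) • w i)
      = 2 ^ Fintype.card ι * ∑ i, B (w i) (w i) := by
  have hexpand (ε : ι → Bool) :
      B (∑ i, rademacherSign (ε i) • w i) (∑ i, rademacherSign (ε i) • w i)
        = ∑ i, ∑ j, rademacherSign (ε i) * rademacherSign (ε j) * B (w i) (w j) := by
    rw [LinearMap.BilinForm.sum_left]
    refine Finset.sum_congr rfl fun i _ => ?_
    simp only [LinearMap.BilinForm.sum_right, LinearMap.BilinForm.smul_left,
      LinearMap.BilinForm.smul_right, mul_assoc]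
    exact Finset.sum_congr rfl fun j _ => mul_left_comm ..
  calc ∑ ε : ι → Bool, B (∑ i, rademacherSign (ε i) • w i) (∑ i, rademacherSign (ε i) • w i)
      = ∑ i, ∑ j, (∑ ε : ι → Bool, rademacherSign (ε i) * rademacherSign (ε j))
          * B (w i) (w j) := by
        simp only [hexpand, Finset.sum_mul]
        rw [Finset.sum_comm]
        exact Finset.sum_congr rfl fun i _ => Finset.sum_comm
    _ = 2 ^ Fintype.card ι * ∑ i, B (w i) (w i) := by
        simp [sum_rademacherSign_mul_rademacherSign, Finset.mul_sum]

end Signs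

section EmpiricalComplexity

variable {ι κ : Type*} [Fintype ι] [Fintype κ]

/-- The class of linear functions `z ↦ θᵀ z` with `θᵀ M θ ≤ γ`, indexed by their coefficient
vectors. -/
def ellipsoidLinearClass (M : Matrix κ κ ℝ) (γ : ℝ) :
    {θ : κ → ℝ // θ ⬝ᵥ (M *ᵥ θ) ≤ γ} → (κ → ℝ) → ℝ :=
  fun θ z => (θ : κ → ℝ) ⬝ᵥ z

lemma iSup_ellipsoidLinearClass_le {M : Matrix κ κ ℝ} (hM : M.PosSemidef) (γ : ℝ)
    (a : ι → ℝ) (w : ι → κ → ℝ) :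
    ⨆ θ, (1 / Fintype.card ι : ℝ) * ∑ i, a i * ellipsoidLinearClass M γ θ (M *ᵥ w i)
      ≤ (1 / Fintype.card ι : ℝ) * √(γ * ((∑ i, a i • w i) ⬝ᵥ (M *ᵥ ∑ i, a i • w i))) := by
  refine Real.iSup_le (fun θ => ?_) (by positivity)
  have hlin : ∑ i, a i * ellipsoidLinearClass M γ θ (M *ᵥ w i)
      = (θ : κ → ℝ) ⬝ᵥ (M *ᵥ ∑ i, a i • w i) := by
    simp [ellipsoidLinearClass, Matrix.mulVec_sum, Matrix.mulVec_smul, dotProduct_sum]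
  have hnonneg : 0 ≤ (∑ i, a i • w i) ⬝ᵥ (M *ᵥ ∑ i, a i • w i) := by
    simpa only [star_trivial] using hM.dotProduct_mulVec_nonneg (∑ i, a i • w i)
  rw [hlin]
  gcongr
  refine (dotProduct_mulVec_le_sqrt_mul hM _ _).trans ?_
  gcongr
  exact θ.2

variable [DecidableEq ι]

/-- The empirical Rademacher complexity, at the sample `x`, of the class of functions
`F t : X → ℝ` indexed by `t : T`. The supremum is the real one, hence `0` when it is infinite or
`T` is empty. -/
noncomputable def empiricalRademacherComplexity {T X : Type*} (F : T → X → ℝ) (x : ι → X) : ℝ :=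
  (1 / 2 ^ Fintype.card ι : ℝ) * ∑ ε : ι → Bool,
    ⨆ t, (1 / Fintype.card ι : ℝ) * ∑ i, rademacherSign (ε i) * F t (x i)

lemma empiricalRademacherComplexity_nonneg {T X : Type*} {F : T → X → ℝ} (hF : ∃ t, F t = 0)
    (x : ι → X) : 0 ≤ empiricalRademacherComplexity F x := by
  obtain ⟨t, ht⟩ := hF
  refine mul_nonneg (by positivity) (Finset.sum_nonneg fun ε _ => Real.iSup_nonneg' ⟨t, ?_⟩)
  simp [ht]

lemma empiricalRademacherComplexity_ellipsoidLinearClass_le {M : Matrix κ κ ℝ}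
    (hM : M.PosSemidef) {γ : ℝ} (hγ : 0 ≤ γ) {x w : ι → κ → ℝ} (hx : ∀ i, x i = M *ᵥ w i) :
    empiricalRademacherComplexity (ellipsoidLinearClass M γ) x
      ≤ (1 / Fintype.card ι : ℝ) * √(γ * ∑ i, x i ⬝ᵥ w i) := by
  classical
  set q : (ι → Bool) → ℝ := fun ε =>
    (∑ i, rademacherSign (ε i) • w i) ⬝ᵥ (M *ᵥ ∑ i, rademacherSign (ε i) • w i)
  have hq_nonneg (ε : ι → Bool) : 0 ≤ γ * q ε :=
    mul_nonneg hγ (by simpa only [star_trivial] using hM.dotProduct_mulVec_nonneg _)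
  have hq_sum : ∑ ε, q ε = 2 ^ Fintype.card ι * ∑ i, x i ⬝ᵥ w i := by
    simpa only [Matrix.toBilin'_apply', ← hx, dotProduct_comm (w _)] using
      sum_bilin_sum_rademacherSign_smul M.toBilin' w
  calc empiricalRademacherComplexity (ellipsoidLinearClass M γ) x
      ≤ (1 / 2 ^ Fintype.card ι : ℝ) * ∑ ε, (1 / Fintype.card ι : ℝ) * √(γ * q ε) := by
        rw [empiricalRademacherComplexity, funext hx]
        gcongr with ε
        exact iSup_ellipsoidLinearClass_le hM γ _ w
    _ = (1 / Fintype.card ι : ℝ) * ((1 / 2 ^ Fintype.card ι : ℝ) * ∑ ε, √(γ * q ε)) := by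
        rw [← Finset.mul_sum, mul_left_comm]
    _ ≤ (1 / Fintype.card ι : ℝ)
          * ((1 / 2 ^ Fintype.card ι : ℝ) * √(2 ^ Fintype.card ι * ∑ ε, γ * q ε)) := by
        gcongr
        simpa using sum_sqrt_le_sqrt_card_mul_sum Finset.univ hq_nonneg
    _ = (1 / Fintype.card ι : ℝ) * √(γ * ∑ i, x i ⬝ᵥ w i) := by
        rw [← Finset.mul_sum, hq_sum, mul_left_comm γ, ← mul_assoc (2 ^ _ : ℝ) (2 ^ _), ← sq,
          Real.sqrt_mul (by positivity), Real.sqrt_sq (by positivity)]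
        field_simp

end EmpiricalComplexity

section SecondMoment

variable {Ω κ : Type*} [MeasurableSpace Ω] {μ : Measure Ω} {X : Ω → κ → ℝ}

/-- The second-moment matrix `E[X Xᵀ]` of a random vector. Its entries are meaningful when the
coordinates of `X` are square integrable. -/
noncomputable def secondMomentMatrix (μ : Measure Ω) (X : Ω → κ → ℝ) : Matrix κ κ ℝ :=
  Matrix.of fun k l => ∫ ω, X ω k * X ω l ∂μ

lemma isSymm_secondMomentMatrix : (secondMomentMatrix μ X).IsSymm :=
  Matrix.IsSymm.ext fun k l => by simp only [secondMomentMatrix, Matrix.of_apply, mul_comm]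

variable [Fintype κ]

lemma integrable_dotProduct_mulVec (hX : ∀ k, MemLp (fun ω => X ω k) 2 μ) (A : Matrix κ κ ℝ) :
    Integrable (fun ω => X ω ⬝ᵥ (A *ᵥ X ω)) μ := by
  simp only [dotProduct_mulVec_eq_sum]
  exact integrable_finsetSum _ fun k _ => integrable_finsetSum _ fun l _ =>
    ((hX k).integrable_mul (hX l)).const_mul _

lemma integral_dotProduct_mulVec (hX : ∀ k, MemLp (fun ω => X ω k) 2 μ) (A : Matrix κ κ ℝ) :
    ∫ ω, X ω ⬝ᵥ (A *ᵥ X ω) ∂μ = (A * secondMomentMatrix μ X).trace := by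
  have hint (k l : κ) : Integrable (fun ω => A k l * (X ω k * X ω l)) μ :=
    ((hX k).integrable_mul (hX l)).const_mul _
  simp only [dotProduct_mulVec_eq_sum, Matrix.trace, Matrix.diag_apply, Matrix.mul_apply]
  rw [integral_finsetSum _ fun k _ => integrable_finsetSum _ fun l _ => hint k l]
  refine Finset.sum_congr rfl fun k _ => ?_
  rw [integral_finsetSum _ fun l _ => hint k l]
  refine Finset.sum_congr rfl fun l _ => ?_
  rw [integral_const_mul, isSymm_secondMomentMatrix.apply k l]
  rfl

lemma integrable_sq_dotProduct (hX : ∀ k, MemLp (fun ω => X ω k) 2 μ) (u : κ → ℝ) :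
    Integrable (fun ω => (u ⬝ᵥ X ω) ^ 2) μ := by
  simpa only [sq_dotProduct_eq_dotProduct_vecMulVec_mulVec] using
    integrable_dotProduct_mulVec hX (vecMulVec u u)

lemma integral_sq_dotProduct (hX : ∀ k, MemLp (fun ω => X ω k) 2 μ) (u : κ → ℝ) :
    ∫ ω, (u ⬝ᵥ X ω) ^ 2 ∂μ = u ⬝ᵥ (secondMomentMatrix μ X *ᵥ u) := by
  simp only [sq_dotProduct_eq_dotProduct_vecMulVec_mulVec]
  rw [integral_dotProduct_mulVec hX, Matrix.vecMulVec_mul, Matrix.trace_vecMulVec,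
    Matrix.dotProduct_mulVec, dotProduct_comm]

lemma posSemidef_secondMomentMatrix {κ : Type*} [Finite κ] {X : Ω → κ → ℝ}
    (hX : ∀ k, MemLp (fun ω => X ω k) 2 μ) : (secondMomentMatrix μ X).PosSemidef := by
  have := Fintype.ofFinite κ
  refine Matrix.PosSemidef.of_dotProduct_mulVec_nonneg ?_ fun u => ?_
  · exact Matrix.isHermitian_iff_isSymm.2 isSymm_secondMomentMatrix
  · rw [star_trivial, ← integral_sq_dotProduct hX]
    exact integral_nonneg fun ω => sq_nonneg _

lemma ae_dotProduct_eq_zero_of_secondMomentMatrix_mulVec_eq_zero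
    (hX : ∀ k, MemLp (fun ω => X ω k) 2 μ) {u : κ → ℝ} (hu : secondMomentMatrix μ X *ᵥ u = 0) :
    ∀ᵐ ω ∂μ, u ⬝ᵥ X ω = 0 := by
  have hint : ∫ ω, (u ⬝ᵥ X ω) ^ 2 ∂μ = 0 := by
    rw [integral_sq_dotProduct hX, hu, dotProduct_zero]
  filter_upwards [(integral_eq_zero_iff_of_nonneg (fun ω => sq_nonneg _)
    (integrable_sq_dotProduct hX u)).1 hint] with ω hω
  exact pow_eq_zero_iff two_ne_zero |>.1 hω

lemma ae_eq_secondMomentMatrix_mulVec (hX : ∀ k, MemLp (fun ω => X ω k) 2 μ) {A : Matrix κ κ ℝ}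
    (hA : secondMomentMatrix μ X * A * secondMomentMatrix μ X = secondMomentMatrix μ X) :
    ∀ᵐ ω ∂μ, X ω = secondMomentMatrix μ X *ᵥ (A *ᵥ X ω) := by
  classical
  have hrow (k : κ) : secondMomentMatrix μ X *ᵥ (1 - secondMomentMatrix μ X * A) k = 0 := by
    have hmul : (1 - secondMomentMatrix μ X * A) * secondMomentMatrix μ X = 0 := by
      rw [Matrix.sub_mul, Matrix.one_mul, hA, sub_self]
    rw [← Matrix.vecMul_transpose, isSymm_secondMomentMatrix.eq]
    exact congrFun hmul k
  filter_upwards [ae_all_iff.2 fun k =>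
    ae_dotProduct_eq_zero_of_secondMomentMatrix_mulVec_eq_zero hX (hrow k)] with ω hω
  have hker : (1 - secondMomentMatrix μ X * A) *ᵥ X ω = 0 := funext hω
  rwa [Matrix.sub_mulVec, Matrix.one_mulVec, ← Matrix.mulVec_mulVec, sub_eq_zero] at hker

end SecondMoment

theorem rademacher_complexity_bound_general {Ω ι κ : Type*} [MeasurableSpace Ω]
    (μ : Measure Ω) [IsProbabilityMeasure μ] [Fintype ι] [DecidableEq ι] [Nonempty ι] [Fintype κ]
    (z : ι → Ω → κ → ℝ) (hz : ∀ i k, MemLp (fun ω => z i ω k) 2 μ)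
    (M : Matrix κ κ ℝ) (hMdef : ∀ i, secondMomentMatrix μ (z i) = M) (γ : ℝ) (hγ : 0 ≤ γ) :
    ∫ ω, empiricalRademacherComplexity (ellipsoidLinearClass M γ) (fun i => z i ω) ∂μ
      ≤ √(γ * M.rank / Fintype.card ι) := by
  have hM : M.PosSemidef := hMdef (Classical.arbitrary ι) ▸ posSemidef_secondMomentMatrix (hz _)
  obtain ⟨A, hA⟩ := exists_mul_mul_self_eq M
  set f : Ω → ℝ := fun ω => γ * ∑ i, z i ω ⬝ᵥ (A *ᵥ z i ω)
  have hf_int : Integrable f μ :=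
    (integrable_finsetSum _ fun i _ => integrable_dotProduct_mulVec (hz i) A).const_mul γ
  have hf_integral : ∫ ω, f ω ∂μ = γ * (Fintype.card ι * M.rank) := by
    rw [integral_const_mul, integral_finsetSum _ fun i _ => integrable_dotProduct_mulVec (hz i) A]
    simp [integral_dotProduct_mulVec (hz _), hMdef, trace_mul_eq_rank_of_mul_mul_self_eq hA]
  have hrange : ∀ᵐ ω ∂μ, ∀ i, z i ω = M *ᵥ (A *ᵥ z i ω) := ae_all_iff.2 fun i =>
    hMdef i ▸ ae_eq_secondMomentMatrix_mulVec (hz i) (by rw [hMdef i, hA])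
  have hf_nonneg : 0 ≤ᵐ[μ] f := by
    filter_upwards [hrange] with ω hω
    exact mul_nonneg hγ (Finset.sum_nonneg fun i _ => dotProduct_nonneg_of_eq_mulVec hM (hω i))
  have hle : ∀ᵐ ω ∂μ, empiricalRademacherComplexity (ellipsoidLinearClass M γ) (fun i => z i ω)
      ≤ (1 / Fintype.card ι : ℝ) * √(f ω) := by
    filter_upwards [hrange] with ω hω
    exact empiricalRademacherComplexity_ellipsoidLinearClass_le hM hγ hω
  calc ∫ ω, empiricalRademacherComplexity (ellipsoidLinearClass M γ) (fun i => z i ω) ∂μ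
      ≤ ∫ ω, (1 / Fintype.card ι : ℝ) * √(f ω) ∂μ :=
        integral_mono_of_nonneg (.of_forall fun ω => empiricalRademacherComplexity_nonneg
          ⟨⟨0, by simpa using hγ⟩, funext fun x => zero_dotProduct x⟩ _)
          ((integrable_sqrt hf_int).const_mul _) hle
    _ ≤ (1 / Fintype.card ι : ℝ) * √(γ * (Fintype.card ι * M.rank)) := by
        rw [integral_const_mul, ← hf_integral]
        gcongr
        exact integral_sqrt_le_sqrt_integral hf_int hf_nonneg
    _ = √(γ * M.rank / Fintype.card ι) := by
        rw [← Real.sqrt_sq (by positivity : (0 : ℝ) ≤ 1 / Fintype.card ι),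
          ← Real.sqrt_mul (by positivity)]
        congr 1
        field_simp

/-- Rademacher complexity bound `R(F_γ) ≤ √(γ · d / n)` for the constrained linear class
`F_γ = {z ↦ θᵀz : θᵀ M θ ≤ γ}`, where `M` is the common (positive definite)
second-moment matrix of the sample vectors `zᵢ` (so `rank M = d`).  Sign vectors are
encoded by `ε : Fin n → Bool`, with `true ↦ 1` and `false ↦ -1`. -/
theorem rademacher_complexity_bound {Ω : Type*} [MeasurableSpace Ω]
    (μ : Measure Ω) [IsProbabilityMeasure μ] {n d : ℕ}
    (z : Fin n → Ω → Fin d → ℝ)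
    (hmeas : ∀ i, Measurable (z i))
    (hInt : ∀ (i : Fin n) (l s : Fin d), Integrable (fun ω => z i ω l * z i ω s) μ)
    (M : Matrix (Fin d) (Fin d) ℝ)
    (hMdef : ∀ (i : Fin n) (l s : Fin d), M l s = ∫ ω, z i ω l * z i ω s ∂μ)
    (hM : M.PosDef) (γ : ℝ) (hγ : 0 ≤ γ) :
    ∫ ω, (1 / 2 ^ n : ℝ) * ∑ ε : Fin n → Bool,
        (⨆ θ : {θ : Fin d → ℝ // θ ⬝ᵥ (M *ᵥ θ) ≤ γ},
          (1 / n : ℝ) * ∑ i, (if ε i then (1 : ℝ) else -1) * ((θ : Fin d → ℝ) ⬝ᵥ z i ω)) ∂μ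
      ≤ Real.sqrt (γ * d / n) := by
  rcases n.eq_zero_or_pos with rfl | hn
  · simp
  have : NeZero n := ⟨hn.ne'⟩
  have hz (i : Fin n) (k : Fin d) : MemLp (fun ω => z i ω k) 2 μ :=
    (memLp_two_iff_integrable_sq (measurable_pi_iff.1 (hmeas i) k).aestronglyMeasurable).2
      (by simpa only [sq] using hInt i k k)
  have hrank : M.rank = d := by simpa using Matrix.rank_of_isUnit M hM.isUnit
  simpa only [empiricalRademacherComplexity, ellipsoidLinearClass, rademacherSign,
    Fintype.card_fin, hrank] using
    rademacher_complexity_bound_general μ z hz M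
      (fun i => Matrix.ext fun l s => (hMdef i l s).symm) γ hγ
end
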